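/- Exponential decay of the modified energy (estimate (pf:ene-low-10) in the proof of Lemma 3.2): let β ≥ 1, δ = μ̲/(16β²) with μ̲ = min{μ,1}, and let ξ ≠ 0 satisfy |ξ| ≤ 2β/ε. Then every solution (â, û) of the Fourier-transformed linearized system with forcing (f̂, ĝ) satisfies, for all t ≥ 0, V(t) ≤ e^{−(δ/3)κt}·V(0) + 4·√(Ω²ε² + |ξ|²)·∫₀ᵗ e^{−(δ/3)κ(t−τ)}·|(f̂(τ), ĝ(τ))| dτ, where V(t) is the nonnegative square root of V(t)² = (Ω²ε² + |ξ|²)·|(â(t), û(t))|² + 2δ|ξ|²·Re⟨iε â(t) ξ, û(t)⟩ and κ = |ξ|⁴/(Ω²ε² + |ξ|²). -/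

import Mathlib

noncomputable section
open scoped BigOperators

/-- Hermitian inner product on `ℂ³`: `⟨v,w⟩ = ∑ₖ vₖ · conj(wₖ)`. -/
def hinner (v w : Fin 3 → ℂ) : ℂ := ∑ k, v k * (starRingEnd ℂ) (w k)

/-- Squared norm `‖w‖² = ∑ₖ |wₖ|²` on `ℂ³`. -/
def vnormSq (w : Fin 3 → ℂ) : ℝ := ∑ k, ‖w k‖ ^ 2

/-- Norm `‖w‖` on `ℂ³`. -/
def vnorm (w : Fin 3 → ℂ) : ℝ := Real.sqrt (vnormSq w)

/-- `|(z,w)| = √(|z|² + ‖w‖²)` for `z ∈ ℂ`, `w ∈ ℂ³`. -/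
def pairNorm (z : ℂ) (w : Fin 3 → ℂ) : ℝ := Real.sqrt (‖z‖ ^ 2 + vnormSq w)

/-- Cross product with `e₃ = (0,0,1)`: `e₃ × w = (−w₂, w₁, 0)`. -/
def cross3 (w : Fin 3 → ℂ) : Fin 3 → ℂ := ![-(w 1), w 0, 0]

/-- `|ξ|² = ∑ₖ ξₖ²` for `ξ ∈ ℝ³`. -/
def xiNormSq (ξ : Fin 3 → ℝ) : ℝ := ∑ k, (ξ k) ^ 2

/-- Euclidean norm `|ξ|` for `ξ ∈ ℝ³`. -/
def xiNorm (ξ : Fin 3 → ℝ) : ℝ := Real.sqrt (xiNormSq ξ)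

/-- `ξ·w = ∑ₖ ξₖ wₖ` for `ξ ∈ ℝ³` regarded in `ℂ³` and `w ∈ ℂ³`. -/
def xiDot (ξ : Fin 3 → ℝ) (w : Fin 3 → ℂ) : ℂ := ∑ k, (ξ k : ℂ) * w k

/-- The Fourier-transformed linearized compressible Navier–Stokes–Coriolis system
at time `t` with data `(â, û)`, derivatives `(â', û')` and forcing `(f̂, ĝ)`:
`â′ + (i/ε)(ξ·û) = f̂` and
`û′ + μ|ξ|²û + (μ+μ′)(ξ·û)ξ + Ω(e₃ × û) + (i/ε)âξ = ĝ`. -/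
def SystemAt (μ μ' ε Ω : ℝ) (ξ : Fin 3 → ℝ)
    (a a' : ℝ → ℂ) (u u' : ℝ → Fin 3 → ℂ)
    (f : ℝ → ℂ) (g : ℝ → Fin 3 → ℂ) (t : ℝ) : Prop :=
  (a' t + (Complex.I / (ε : ℂ)) * xiDot ξ (u t) = f t) ∧
  (∀ k, u' t k + ((μ * xiNormSq ξ : ℝ) : ℂ) * u t k
      + (((μ + μ') : ℝ) : ℂ) * xiDot ξ (u t) * (ξ k : ℂ)
      + ((Ω : ℝ) : ℂ) * cross3 (u t) k
      + (Complex.I / (ε : ℂ)) * a t * (ξ k : ℂ) = g t k)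

/-- `κ(|ξ|, Ωε) = |ξ|⁴/(Ω²ε² + |ξ|²)`. -/
def kappa (Ω ε : ℝ) (ξ : Fin 3 → ℝ) : ℝ :=
  xiNorm ξ ^ 4 / (Ω ^ 2 * ε ^ 2 + xiNorm ξ ^ 2)

/-!
The plain energy `‖a‖² + ‖u‖²` is dissipated only through `u`. Along the system,
`Re⟨iεaξ, u⟩` has derivative `-‖ξ‖²‖a‖²` plus errors, so a small multiple of it added to the energy
also damps `a`. The factor `Ω²ε² + ‖ξ‖²` in front of the energy lets the viscous dissipation absorb
the error terms, including the one produced by the rotation, while `δε‖ξ‖ ≲ 1` keeps the sum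
equivalent to the weighted energy. A Grönwall argument for the square root concludes. All of this
takes place in an arbitrary complex inner product space, where the rotation enters only through
`Re⟨v, Jv⟩ = 0` and `‖Jv‖ ≤ ‖v‖`.
-/

section Gronwall

open MeasureTheory Set

-- Regularize `√y` by `√(y + r²)`, which stays differentiable where `y` vanishes, and let `r → 0`.
lemma sqrt_le_sqrt_add_integral_of_deriv_right_le {y y' h : ℝ → ℝ} {a b : ℝ} (hab : a ≤ b)
    (hy : ContinuousOn y (Icc a b)) (hy' : ∀ t ∈ Ioo a b, HasDerivWithinAt y (y' t) (Ioi t) t)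
    (hy0 : ∀ t ∈ Icc a b, 0 ≤ y t) (hh : IntegrableOn h (Icc a b)) (hh0 : ∀ t ∈ Ioo a b, 0 ≤ h t)
    (hle : ∀ t ∈ Ioo a b, y' t ≤ 2 * h t * √(y t)) :
    √(y b) ≤ √(y a) + ∫ τ in a..b, h τ := by
  refine le_of_forall_pos_le_add fun r hr ↦ ?_
  have hpos : ∀ t ∈ Icc a b, 0 < √(y t + r ^ 2) := fun t ht ↦
    Real.sqrt_pos.2 (add_pos_of_nonneg_of_pos (hy0 t ht) (by positivity))
  have hreg : √(y b + r ^ 2) - √(y a + r ^ 2) ≤ ∫ τ in a..b, h τ := by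
    refine intervalIntegral.sub_le_integral_of_hasDeriv_right_of_le hab (by fun_prop)
      (fun t ht ↦ ((hy' t ht).add_const (r ^ 2)).sqrt
        (Real.sqrt_pos.1 (hpos t (Ioo_subset_Icc_self ht))).ne') hh fun t ht ↦ ?_
    rw [div_le_iff₀ (mul_pos two_pos (hpos t (Ioo_subset_Icc_self ht)))]
    calc y' t ≤ 2 * h t * √(y t) := hle t ht
      _ ≤ 2 * h t * √(y t + r ^ 2) := by
          have := hh0 t ht
          gcongr
          exact le_add_of_nonneg_right (sq_nonneg r)
      _ = h t * (2 * √(y t + r ^ 2)) := by ring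
  have hright : √(y b) ≤ √(y b + r ^ 2) :=
    Real.sqrt_le_sqrt (le_add_of_nonneg_right (sq_nonneg r))
  have hleft : √(y a + r ^ 2) ≤ √(y a) + r := by
    rw [Real.sqrt_le_left (by positivity), add_sq, Real.sq_sqrt (hy0 a (left_mem_Icc.2 hab))]
    linarith [mul_nonneg (Real.sqrt_nonneg (y a)) hr.le]
  linarith

theorem sqrt_le_exp_mul_add_integral_of_deriv_right_le {y y' k : ℝ → ℝ} {a b c : ℝ} (hab : a ≤ b)
    (hy : ContinuousOn y (Icc a b)) (hy' : ∀ t ∈ Ioo a b, HasDerivWithinAt y (y' t) (Ioi t) t)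
    (hy0 : ∀ t ∈ Icc a b, 0 ≤ y t) (hk : IntegrableOn k (Icc a b)) (hk0 : ∀ t ∈ Ioo a b, 0 ≤ k t)
    (hle : ∀ t ∈ Ioo a b, y' t / 2 ≤ c * y t + k t * √(y t)) :
    √(y b) ≤ Real.exp (c * (b - a)) * √(y a) + ∫ τ in a..b, Real.exp (c * (b - τ)) * k τ := by
  set e : ℝ → ℝ := fun t ↦ Real.exp (c * (b - t)) with he
  have he0 (t : ℝ) : 0 < e t := Real.exp_pos _
  have hec : Continuous e := by fun_prop
  have he' (t : ℝ) : HasDerivAt e (-c * e t) t := by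
    refine (((hasDerivAt_id t).const_sub b).const_mul c).exp.congr_deriv ?_
    simp only [he, id_eq]
    ring
  have hsqrt (t : ℝ) : √(e t ^ 2 * y t) = e t * √(y t) := by
    rw [Real.sqrt_mul (sq_nonneg _), Real.sqrt_sq (he0 t).le]
  have hweighted := sqrt_le_sqrt_add_integral_of_deriv_right_le (y := fun t ↦ e t ^ 2 * y t)
    (y' := fun t ↦ 2 * e t ^ 2 * (y' t / 2 - c * y t)) (h := fun t ↦ e t * k t) hab (by fun_prop)
    (fun t ht ↦ (((he' t).hasDerivWithinAt.pow 2).mul (hy' t ht)).congr_deriv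
      (by simp only [Pi.pow_apply]; push_cast; ring))
    (fun t ht ↦ mul_nonneg (sq_nonneg _) (hy0 t ht))
    (hk.continuousOn_mul hec.continuousOn isCompact_Icc)
    (fun t ht ↦ mul_nonneg (he0 t).le (hk0 t ht)) fun t ht ↦ ?_
  · have heb : e b = 1 := by simp only [he, sub_self, mul_zero, Real.exp_zero]
    simpa only [hsqrt, heb, one_pow, one_mul] using hweighted
  · calc 2 * e t ^ 2 * (y' t / 2 - c * y t) ≤ 2 * e t ^ 2 * (k t * √(y t)) :=
          mul_le_mul_of_nonneg_left (by linarith [hle t ht]) (by positivity)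
      _ = 2 * (e t * k t) * √(e t ^ 2 * y t) := by rw [hsqrt]; ring

end Gronwall

section AbstractSystem

open Complex
open scoped InnerProductSpace ComplexConjugate

variable {H : Type*} [NormedAddCommGroup H] {μ ν ε Ω δ : ℝ} {ξ : H}

/-- The factor `Ω²ε² + |ξ|²` in front of `|(a, u)|²` in the modified energy. -/
def energyWeight (Ω ε : ℝ) (ξ : H) : ℝ := Ω ^ 2 * ε ^ 2 + ‖ξ‖ ^ 2

lemma norm_sq_le_energyWeight : ‖ξ‖ ^ 2 ≤ energyWeight Ω ε ξ :=
  le_add_of_nonneg_left (by positivity)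

lemma energyWeight_pos (hξ : ξ ≠ 0) : 0 < energyWeight Ω ε ξ :=
  (pow_pos (norm_pos_iff.2 hξ) 2).trans_le norm_sq_le_energyWeight

lemma energyWeight_nonneg : 0 ≤ energyWeight Ω ε ξ :=
  (sq_nonneg ‖ξ‖).trans norm_sq_le_energyWeight

variable [InnerProductSpace ℂ H] {J : H → H} {a a' f : ℂ} {u u' g : H}

/-- The linearized system at a fixed time on a complex inner product space: `(a, u)` is the state,
`(a', u')` its time derivative and `(f, g)` the forcing. `J` stands for the rotation `e₃ × ·`, and
the viscosities enter through the transversal `μ` and the longitudinal `ν = 2μ + μ'`. -/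
structure LinearizedSystem (μ ν ε Ω : ℝ) (J : H → H) (ξ : H) (a a' f : ℂ) (u u' g : H) :
    Prop where
  mass : a' + I / ε * ⟪ξ, u⟫_ℂ = f
  momentum : u' + ((μ * ‖ξ‖ ^ 2 : ℝ) : ℂ) • u + (((ν - μ : ℝ) : ℂ) * ⟪ξ, u⟫_ℂ) • ξ
    + (Ω : ℂ) • J u + (I / ε * a) • ξ = g

/-- The term `Re⟨iεaξ, u⟩` coupling density and velocity. Mathlib's inner product is linear in the
second argument, so the arguments appear in the opposite order. -/
def crossEnergy (ε : ℝ) (ξ : H) (a : ℂ) (u : H) : ℝ := (⟪u, (I * ε * a) • ξ⟫_ℂ).re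

/-- The square `V²` of the modified energy of the state `(a, u)`. -/
def modifiedEnergySq (δ Ω ε : ℝ) (ξ : H) (a : ℂ) (u : H) : ℝ :=
  energyWeight Ω ε ξ * (‖a‖ ^ 2 + ‖u‖ ^ 2) + 2 * δ * ‖ξ‖ ^ 2 * crossEnergy ε ξ a u

/-- Half the time derivative of `modifiedEnergySq` along a curve through `(a, u)` with velocity
`(a', u')`. -/
def modifiedEnergyRate (δ Ω ε : ℝ) (ξ : H) (a a' : ℂ) (u u' : H) : ℝ :=
  energyWeight Ω ε ξ * ((⟪a, a'⟫_ℂ).re + (⟪u, u'⟫_ℂ).re)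
    + δ * ‖ξ‖ ^ 2 * (crossEnergy ε ξ a' u + crossEnergy ε ξ a u')

/-- The smallness conditions on the weight `δ` of the cross term under which the modified energy is
coercive and dissipated; `r` stands for `|ε||ξ|`. -/
structure IsAdmissibleWeight (μ ν r δ : ℝ) : Prop where
  nonneg : 0 ≤ δ
  le_viscosity : 16 * δ ≤ min μ ν
  coercive : 8 * δ * r ≤ 1
  damping_le_viscosity : 4 * δ * (ν * r) ^ 2 ≤ min μ ν

lemma crossEnergy_eq_re_mul (ε : ℝ) (ξ : H) (a : ℂ) (u : H) :
    crossEnergy ε ξ a u = (I * ε * a * ⟪u, ξ⟫_ℂ).re := by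
  rw [crossEnergy, inner_smul_right]

lemma abs_crossEnergy_le (ε : ℝ) (ξ : H) (a : ℂ) (u : H) :
    |crossEnergy ε ξ a u| ≤ |ε| * ‖ξ‖ * (‖a‖ * ‖u‖) :=
  calc |crossEnergy ε ξ a u| ≤ ‖⟪u, (I * ε * a) • ξ⟫_ℂ‖ := abs_re_le_norm _
    _ ≤ ‖u‖ * ‖(I * ε * a) • ξ‖ := norm_inner_le_norm _ _
    _ = |ε| * ‖ξ‖ * (‖a‖ * ‖u‖) := by
        rw [norm_smul, norm_mul, norm_mul, norm_I, norm_real, Real.norm_eq_abs]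
        ring

lemma abs_modifiedEnergySq_sub_le (hδ0 : 0 ≤ δ) (hδ : 8 * δ * (|ε| * ‖ξ‖) ≤ 1) :
    |modifiedEnergySq δ Ω ε ξ a u - energyWeight Ω ε ξ * (‖a‖ ^ 2 + ‖u‖ ^ 2)|
      ≤ energyWeight Ω ε ξ * (‖a‖ ^ 2 + ‖u‖ ^ 2) / 8 := by
  have hweight : 0 ≤ 2 * δ * ‖ξ‖ ^ 2 := by positivity
  calc |modifiedEnergySq δ Ω ε ξ a u - energyWeight Ω ε ξ * (‖a‖ ^ 2 + ‖u‖ ^ 2)|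
      = 2 * δ * ‖ξ‖ ^ 2 * |crossEnergy ε ξ a u| := by
        rw [modifiedEnergySq, add_sub_cancel_left, abs_mul, abs_of_nonneg hweight]
    _ ≤ 2 * δ * ‖ξ‖ ^ 2 * (|ε| * ‖ξ‖ * (‖a‖ * ‖u‖)) := by
        gcongr
        exact abs_crossEnergy_le ε ξ a u
    _ ≤ 2 * δ * ‖ξ‖ ^ 2 * (|ε| * ‖ξ‖ * ((‖a‖ ^ 2 + ‖u‖ ^ 2) / 2)) := by
        gcongr
        linarith [two_mul_le_add_sq ‖a‖ ‖u‖]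
    _ = 8 * δ * (|ε| * ‖ξ‖) * (‖ξ‖ ^ 2 * (‖a‖ ^ 2 + ‖u‖ ^ 2) / 8) := by ring
    _ ≤ 1 * (energyWeight Ω ε ξ * (‖a‖ ^ 2 + ‖u‖ ^ 2) / 8) := by
        gcongr
        exact norm_sq_le_energyWeight
    _ = energyWeight Ω ε ξ * (‖a‖ ^ 2 + ‖u‖ ^ 2) / 8 := one_mul _

lemma modifiedEnergySq_nonneg (hδ0 : 0 ≤ δ) (hδ : 8 * δ * (|ε| * ‖ξ‖) ≤ 1) :
    0 ≤ modifiedEnergySq δ Ω ε ξ a u := by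
  have hE : 0 ≤ energyWeight Ω ε ξ * (‖a‖ ^ 2 + ‖u‖ ^ 2) :=
    mul_nonneg energyWeight_nonneg (by positivity)
  linarith [neg_le_of_abs_le (abs_modifiedEnergySq_sub_le (Ω := Ω) (a := a) (u := u) hδ0 hδ)]

lemma sqrt_energyWeight_mul_norm_le (hδ0 : 0 ≤ δ) (hδ : 8 * δ * (|ε| * ‖ξ‖) ≤ 1) :
    √(energyWeight Ω ε ξ) * √(‖a‖ ^ 2 + ‖u‖ ^ 2) ≤ 2 * √(modifiedEnergySq δ Ω ε ξ a u) := by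
  have hE : 0 ≤ energyWeight Ω ε ξ * (‖a‖ ^ 2 + ‖u‖ ^ 2) :=
    mul_nonneg energyWeight_nonneg (by positivity)
  rw [← Real.sqrt_mul energyWeight_nonneg, Real.sqrt_le_left (by positivity), mul_pow,
    Real.sq_sqrt (modifiedEnergySq_nonneg hδ0 hδ)]
  linarith [neg_le_of_abs_le (abs_modifiedEnergySq_sub_le (Ω := Ω) (a := a) (u := u) hδ0 hδ)]

section Derivative

variable {s : Set ℝ} {t : ℝ}

lemma hasDerivWithinAt_re_inner {v w : ℝ → H} {v' w' : H} (hv : HasDerivWithinAt v v' s t)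
    (hw : HasDerivWithinAt w w' s t) :
    HasDerivWithinAt (fun τ ↦ (⟪v τ, w τ⟫_ℂ).re) ((⟪v t, w'⟫_ℂ).re + (⟪v', w t⟫_ℂ).re) s t :=
  reCLM.hasFDerivAt.comp_hasDerivWithinAt t (hv.inner ℂ hw)

lemma hasDerivWithinAt_norm_sq {v : ℝ → H} {v' : H} (hv : HasDerivWithinAt v v' s t) :
    HasDerivWithinAt (fun τ ↦ ‖v τ‖ ^ 2) (2 * (⟪v t, v'⟫_ℂ).re) s t := by
  let := InnerProductSpace.complexToReal (G := H)
  exact hv.norm_sq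

lemma hasDerivWithinAt_modifiedEnergySq {a : ℝ → ℂ} {u : ℝ → H} {a' : ℂ} {u' : H}
    (ha : HasDerivWithinAt a a' s t) (hu : HasDerivWithinAt u u' s t) :
    HasDerivWithinAt (fun τ ↦ modifiedEnergySq δ Ω ε ξ (a τ) (u τ))
      (2 * modifiedEnergyRate δ Ω ε ξ (a t) a' (u t) u') s t := by
  have hcross : HasDerivWithinAt (fun τ ↦ crossEnergy ε ξ (a τ) (u τ))
      (crossEnergy ε ξ a' (u t) + crossEnergy ε ξ (a t) u') s t :=
    hasDerivWithinAt_re_inner hu ((ha.const_mul _).smul_const ξ)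
  refine ((((hasDerivWithinAt_norm_sq ha).add (hasDerivWithinAt_norm_sq hu)).const_mul _).add
    (hcross.const_mul _)).congr_deriv ?_
  rw [modifiedEnergyRate]
  ring

end Derivative

namespace LinearizedSystem

-- The skew terms (pressure gradient against divergence, and the rotation) do no work.
lemma re_inner_mass_add_re_inner_momentum
    (h : LinearizedSystem μ ν ε Ω J ξ a a' f u u' g) (hJ : (⟪u, J u⟫_ℂ).re = 0) :
    (⟪a, a'⟫_ℂ).re + (⟪u, u'⟫_ℂ).re
      = (⟪a, f⟫_ℂ).re + (⟪u, g⟫_ℂ).re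
        - (μ * ‖ξ‖ ^ 2 * ‖u‖ ^ 2 + (ν - μ) * ‖⟪ξ, u⟫_ℂ‖ ^ 2) := by
  have hpressure (d : ℂ) : (I / ε * a * conj d).re + (⟪a, I / ε * d⟫_ℂ).re = 0 := by
    simp only [div_eq_mul_inv, ← ofReal_inv, RCLike.inner_apply, mul_re, mul_im, I_re, I_im,
      ofReal_re, ofReal_im, conj_re, conj_im]
    ring
  have hdiv : ⟪ξ, u⟫_ℂ * ⟪u, ξ⟫_ℂ = ((‖⟪ξ, u⟫_ℂ‖ ^ 2 : ℝ) : ℂ) := by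
    rw [← inner_conj_symm u ξ, mul_conj, normSq_eq_norm_sq]
  have hu : ⟪u, u⟫_ℂ = ((‖u‖ ^ 2 : ℝ) : ℂ) := by
    rw [inner_self_eq_norm_sq_to_K, ofReal_pow]
    rfl
  have hskew := hpressure ⟪ξ, u⟫_ℂ
  rw [inner_conj_symm] at hskew
  rw [← h.mass, ← h.momentum]
  simp only [inner_add_right, inner_smul_right, mul_assoc, hdiv, hu, add_re, re_ofReal_mul, hJ,
    ofReal_re] at hskew ⊢
  linarith

lemma crossEnergy_mass (hε : ε ≠ 0) (h : LinearizedSystem μ ν ε Ω J ξ a a' f u u' g) :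
    crossEnergy ε ξ a' u = crossEnergy ε ξ f u + ‖⟪ξ, u⟫_ℂ‖ ^ 2 := by
  have hε' : (ε : ℂ) ≠ 0 := ofReal_ne_zero.2 hε
  have hexpand : I * ε * a' * ⟪u, ξ⟫_ℂ
      = I * ε * f * ⟪u, ξ⟫_ℂ + ((‖⟪ξ, u⟫_ℂ‖ ^ 2 : ℝ) : ℂ) := by
    rw [← h.mass, ← normSq_eq_norm_sq, ← mul_conj, inner_conj_symm]
    field_simp
    linear_combination (-⟪u, ξ⟫_ℂ * ⟪ξ, u⟫_ℂ) * I_sq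
  simp only [crossEnergy_eq_re_mul, hexpand, add_re, ofReal_re]

lemma crossEnergy_momentum (hε : ε ≠ 0) (h : LinearizedSystem μ ν ε Ω J ξ a a' f u u' g) :
    crossEnergy ε ξ a u' = crossEnergy ε ξ a g - ‖ξ‖ ^ 2 * ‖a‖ ^ 2
      - ν * ‖ξ‖ ^ 2 * crossEnergy ε ξ a u - Ω * crossEnergy ε ξ a (J u) := by
  have hε' : (ε : ℂ) ≠ 0 := ofReal_ne_zero.2 hε
  have hexpand : I * ε * a * ⟪u', ξ⟫_ℂ = I * ε * a * ⟪g, ξ⟫_ℂ - ((‖ξ‖ ^ 2 * ‖a‖ ^ 2 : ℝ) : ℂ)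
      - ((ν * ‖ξ‖ ^ 2 : ℝ) : ℂ) * (I * ε * a * ⟪u, ξ⟫_ℂ) - Ω * (I * ε * a * ⟪J u, ξ⟫_ℂ) := by
    rw [← h.momentum]
    simp only [inner_add_left, inner_smul_left, map_mul, map_div₀, conj_ofReal, conj_I,
      inner_conj_symm, inner_self_eq_norm_sq_to_K, ← normSq_eq_norm_sq a, ofReal_mul, ← mul_conj]
    push_cast
    field_simp
    linear_combination (a * ‖ξ‖ ^ 2 * conj a) * I_sq
  simp only [crossEnergy_eq_re_mul, hexpand, sub_re, re_ofReal_mul, ofReal_re]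

end LinearizedSystem

lemma norm_inner_sq_le (v w : H) : ‖⟪v, w⟫_ℂ‖ ^ 2 ≤ ‖v‖ ^ 2 * ‖w‖ ^ 2 := by
  rw [← mul_pow]
  gcongr
  exact norm_inner_le_norm v w

lemma min_mul_norm_sq_le_dissipation (μ ν : ℝ) (ξ u : H) :
    min μ ν * (‖ξ‖ ^ 2 * ‖u‖ ^ 2) ≤ μ * ‖ξ‖ ^ 2 * ‖u‖ ^ 2 + (ν - μ) * ‖⟪ξ, u⟫_ℂ‖ ^ 2 := by
  rcases le_total μ ν with hμν | hνμ
  · rw [min_eq_left hμν]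
    linarith [mul_nonneg (sub_nonneg.2 hμν) (sq_nonneg ‖⟪ξ, u⟫_ℂ‖)]
  · rw [min_eq_right hνμ]
    linarith [mul_le_mul_of_nonneg_left (norm_inner_sq_le ξ u) (sub_nonneg.2 hνμ)]

lemma mul_le_sq_div_four_add_sq (x y : ℝ) : x * y ≤ x ^ 2 / 4 + y ^ 2 := by
  linarith [sq_nonneg (x / 2 - y)]

lemma mul_add_mul_le_sqrt_mul_sqrt (x₁ x₂ y₁ y₂ : ℝ) :
    x₁ * y₁ + x₂ * y₂ ≤ √(x₁ ^ 2 + x₂ ^ 2) * √(y₁ ^ 2 + y₂ ^ 2) := by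
  simpa using Real.sum_mul_le_sqrt_mul_sqrt Finset.univ ![x₁, x₂] ![y₁, y₂]

/-- The part of `modifiedEnergyRate` along the linearized system that does not involve the
forcing. -/
def unforcedEnergyRate (δ μ ν Ω ε : ℝ) (J : H → H) (ξ : H) (a : ℂ) (u : H) : ℝ :=
  δ * ‖ξ‖ ^ 2 * (‖⟪ξ, u⟫_ℂ‖ ^ 2 - ‖ξ‖ ^ 2 * ‖a‖ ^ 2 - ν * ‖ξ‖ ^ 2 * crossEnergy ε ξ a u
      - Ω * crossEnergy ε ξ a (J u))
    - energyWeight Ω ε ξ * (μ * ‖ξ‖ ^ 2 * ‖u‖ ^ 2 + (ν - μ) * ‖⟪ξ, u⟫_ℂ‖ ^ 2)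

/-- The contribution of the forcing `(f, g)` to `modifiedEnergyRate`. -/
def forcingRate (δ Ω ε : ℝ) (ξ : H) (a f : ℂ) (u g : H) : ℝ :=
  energyWeight Ω ε ξ * ((⟪a, f⟫_ℂ).re + (⟪u, g⟫_ℂ).re)
    + δ * ‖ξ‖ ^ 2 * (crossEnergy ε ξ f u + crossEnergy ε ξ a g)

lemma neg_longitudinal_crossEnergy_le :
    -(ν * crossEnergy ε ξ a u) ≤ ‖a‖ ^ 2 / 4 + (ν * (|ε| * ‖ξ‖)) ^ 2 * ‖u‖ ^ 2 :=
  calc -(ν * crossEnergy ε ξ a u) ≤ |ν| * |crossEnergy ε ξ a u| := by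
        rw [← abs_mul]; exact neg_le_abs _
    _ ≤ |ν| * (|ε| * ‖ξ‖ * (‖a‖ * ‖u‖)) := by
        gcongr
        exact abs_crossEnergy_le ε ξ a u
    _ = ‖a‖ * (|ν| * (|ε| * ‖ξ‖) * ‖u‖) := by ring
    _ ≤ ‖a‖ ^ 2 / 4 + (|ν| * (|ε| * ‖ξ‖) * ‖u‖) ^ 2 := mul_le_sq_div_four_add_sq _ _
    _ = ‖a‖ ^ 2 / 4 + (ν * (|ε| * ‖ξ‖)) ^ 2 * ‖u‖ ^ 2 := by
        simp only [mul_pow, sq_abs]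

lemma neg_rotational_crossEnergy_le (hJ : ‖J u‖ ≤ ‖u‖) :
    -(Ω * crossEnergy ε ξ a (J u)) ≤ ‖ξ‖ ^ 2 * ‖a‖ ^ 2 / 4 + Ω ^ 2 * ε ^ 2 * ‖u‖ ^ 2 :=
  calc -(Ω * crossEnergy ε ξ a (J u)) ≤ |Ω| * |crossEnergy ε ξ a (J u)| := by
        rw [← abs_mul]; exact neg_le_abs _
    _ ≤ |Ω| * (|ε| * ‖ξ‖ * (‖a‖ * ‖u‖)) := by
        gcongr
        exact (abs_crossEnergy_le ε ξ a (J u)).trans (by gcongr)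
    _ = ‖ξ‖ * ‖a‖ * (|Ω| * |ε| * ‖u‖) := by ring
    _ ≤ (‖ξ‖ * ‖a‖) ^ 2 / 4 + (|Ω| * |ε| * ‖u‖) ^ 2 := mul_le_sq_div_four_add_sq _ _
    _ = ‖ξ‖ ^ 2 * ‖a‖ ^ 2 / 4 + Ω ^ 2 * ε ^ 2 * ‖u‖ ^ 2 := by
        simp only [mul_pow, sq_abs]

lemma unforcedEnergyRate_le (hJ : ‖J u‖ ≤ ‖u‖) (hδ : IsAdmissibleWeight μ ν (|ε| * ‖ξ‖) δ) :
    unforcedEnergyRate δ μ ν Ω ε J ξ a u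
      ≤ -(δ / 2 * ‖ξ‖ ^ 4 * (‖a‖ ^ 2 + ‖u‖ ^ 2)) := by
  have hδ0 := hδ.nonneg
  set A := energyWeight Ω ε ξ with hA
  have hA0 : 0 ≤ A := energyWeight_nonneg
  have hξA : ‖ξ‖ ^ 2 ≤ A := norm_sq_le_energyWeight
  set Q := ‖ξ‖ ^ 2 * ‖u‖ ^ 2
  have hQ0 : 0 ≤ Q := by positivity
  have hcoupling : ‖⟪ξ, u⟫_ℂ‖ ^ 2 - ‖ξ‖ ^ 2 * ‖a‖ ^ 2 - ν * ‖ξ‖ ^ 2 * crossEnergy ε ξ a u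
      - Ω * crossEnergy ε ξ a (J u)
      ≤ -(‖ξ‖ ^ 2 * ‖a‖ ^ 2 / 2) + (A + ‖ξ‖ ^ 2 * (ν * (|ε| * ‖ξ‖)) ^ 2) * ‖u‖ ^ 2 := by
    have hlong := mul_le_mul_of_nonneg_left
      (neg_longitudinal_crossEnergy_le (ν := ν) (ε := ε) (ξ := ξ) (a := a) (u := u))
      (sq_nonneg ‖ξ‖)
    have hrot := neg_rotational_crossEnergy_le (Ω := Ω) (ε := ε) (ξ := ξ) (a := a) hJ
    rw [hA, energyWeight]
    linarith [norm_inner_sq_le ξ u]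
  have hvelocity : δ * (A + ‖ξ‖ ^ 2 * (ν * (|ε| * ‖ξ‖)) ^ 2) + δ / 2 * ‖ξ‖ ^ 2 ≤ A * min μ ν := by
    have hlong : δ * (ν * (|ε| * ‖ξ‖)) ^ 2 * ‖ξ‖ ^ 2 ≤ min μ ν / 4 * A := by
      gcongr
      · linarith [hδ.le_viscosity]
      · linarith [hδ.damping_le_viscosity]
    have hrest : δ * A + δ / 2 * ‖ξ‖ ^ 2 ≤ 3 / 2 * δ * A := by
      linarith [mul_le_mul_of_nonneg_left hξA hδ0]
    linarith [mul_le_mul_of_nonneg_right hδ.le_viscosity hA0, mul_nonneg hδ0 hA0]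
  have hcoupling_le := mul_le_mul_of_nonneg_left hcoupling (by positivity : 0 ≤ δ * ‖ξ‖ ^ 2)
  have hdissipation_ge := mul_le_mul_of_nonneg_left (min_mul_norm_sq_le_dissipation μ ν ξ u) hA0
  have hvelocity_le := mul_le_mul_of_nonneg_right hvelocity hQ0
  rw [unforcedEnergyRate]
  linarith

lemma forcingRate_le (hδ0 : 0 ≤ δ) (hδ : 8 * δ * (|ε| * ‖ξ‖) ≤ 1) :
    forcingRate δ Ω ε ξ a f u g
      ≤ 4 * √(energyWeight Ω ε ξ) * √(‖f‖ ^ 2 + ‖g‖ ^ 2) * √(modifiedEnergySq δ Ω ε ξ a u) := by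
  set A := energyWeight Ω ε ξ
  set N := √(‖a‖ ^ 2 + ‖u‖ ^ 2)
  set F := √(‖f‖ ^ 2 + ‖g‖ ^ 2)
  have hA0 : 0 ≤ A := energyWeight_nonneg
  have hpower : (⟪a, f⟫_ℂ).re + (⟪u, g⟫_ℂ).re ≤ N * F :=
    (add_le_add (re_inner_le_norm (𝕜 := ℂ) a f) (re_inner_le_norm (𝕜 := ℂ) u g)).trans
      (mul_add_mul_le_sqrt_mul_sqrt _ _ _ _)
  have hcross : crossEnergy ε ξ f u + crossEnergy ε ξ a g ≤ |ε| * ‖ξ‖ * (N * F) :=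
    calc crossEnergy ε ξ f u + crossEnergy ε ξ a g
        ≤ |ε| * ‖ξ‖ * (‖f‖ * ‖u‖) + |ε| * ‖ξ‖ * (‖a‖ * ‖g‖) :=
          add_le_add ((le_abs_self _).trans (abs_crossEnergy_le ..))
            ((le_abs_self _).trans (abs_crossEnergy_le ..))
      _ = |ε| * ‖ξ‖ * (‖a‖ * ‖g‖ + ‖u‖ * ‖f‖) := by ring
      _ ≤ |ε| * ‖ξ‖ * (N * F) := by
          gcongr
          simpa only [add_comm (‖g‖ ^ 2)] using mul_add_mul_le_sqrt_mul_sqrt ‖a‖ ‖u‖ ‖g‖ ‖f‖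
  have hsmall : δ * ‖ξ‖ ^ 2 * (|ε| * ‖ξ‖) ≤ A :=
    calc δ * ‖ξ‖ ^ 2 * (|ε| * ‖ξ‖) = δ * (|ε| * ‖ξ‖) * ‖ξ‖ ^ 2 := by ring
      _ ≤ 1 * A := by
          gcongr
          · linarith [mul_nonneg hδ0 (by positivity : 0 ≤ |ε| * ‖ξ‖)]
          · exact norm_sq_le_energyWeight
      _ = A := one_mul A
  calc forcingRate δ Ω ε ξ a f u g ≤ A * (N * F) + δ * ‖ξ‖ ^ 2 * (|ε| * ‖ξ‖ * (N * F)) := by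
        rw [forcingRate]
        gcongr
    _ = (A + δ * ‖ξ‖ ^ 2 * (|ε| * ‖ξ‖)) * (N * F) := by ring
    _ ≤ (A + A) * (N * F) := by gcongr
    _ = 2 * √A * F * (√A * N) := by
        linear_combination (-2 * (N * F)) * Real.sq_sqrt hA0
    _ ≤ 2 * √A * F * (2 * √(modifiedEnergySq δ Ω ε ξ a u)) := by
        exact mul_le_mul_of_nonneg_left (sqrt_energyWeight_mul_norm_le hδ0 hδ) (by positivity)
    _ = 4 * √A * F * √(modifiedEnergySq δ Ω ε ξ a u) := by ring

lemma decayRate_mul_modifiedEnergySq_le (hξ : ξ ≠ 0) (hδ0 : 0 ≤ δ)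
    (hδ : 8 * δ * (|ε| * ‖ξ‖) ≤ 1) :
    δ / 3 * (‖ξ‖ ^ 4 / energyWeight Ω ε ξ) * modifiedEnergySq δ Ω ε ξ a u
      ≤ δ / 2 * ‖ξ‖ ^ 4 * (‖a‖ ^ 2 + ‖u‖ ^ 2) := by
  have hA : 0 < energyWeight Ω ε ξ := energyWeight_pos hξ
  have hW : modifiedEnergySq δ Ω ε ξ a u
      ≤ 3 / 2 * (energyWeight Ω ε ξ * (‖a‖ ^ 2 + ‖u‖ ^ 2)) := by
    linarith [le_of_abs_le (abs_modifiedEnergySq_sub_le (Ω := Ω) (a := a) (u := u) hδ0 hδ),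
      mul_nonneg hA.le (by positivity : 0 ≤ ‖a‖ ^ 2 + ‖u‖ ^ 2)]
  calc δ / 3 * (‖ξ‖ ^ 4 / energyWeight Ω ε ξ) * modifiedEnergySq δ Ω ε ξ a u
      ≤ δ / 3 * (‖ξ‖ ^ 4 / energyWeight Ω ε ξ)
          * (3 / 2 * (energyWeight Ω ε ξ * (‖a‖ ^ 2 + ‖u‖ ^ 2))) := by gcongr
    _ = δ / 2 * ‖ξ‖ ^ 4 * (‖a‖ ^ 2 + ‖u‖ ^ 2) := by
        field_simp

lemma LinearizedSystem.modifiedEnergyRate_eq (hε : ε ≠ 0)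
    (h : LinearizedSystem μ ν ε Ω J ξ a a' f u u' g) (hJ : (⟪u, J u⟫_ℂ).re = 0) :
    modifiedEnergyRate δ Ω ε ξ a a' u u'
      = unforcedEnergyRate δ μ ν Ω ε J ξ a u + forcingRate δ Ω ε ξ a f u g := by
  rw [modifiedEnergyRate, unforcedEnergyRate, forcingRate,
    h.re_inner_mass_add_re_inner_momentum hJ, h.crossEnergy_mass hε, h.crossEnergy_momentum hε]
  ring

lemma LinearizedSystem.modifiedEnergyRate_le (hξ : ξ ≠ 0) (hε : ε ≠ 0)
    (hδ : IsAdmissibleWeight μ ν (|ε| * ‖ξ‖) δ) (hJ_skew : (⟪u, J u⟫_ℂ).re = 0)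
    (hJ_norm : ‖J u‖ ≤ ‖u‖) (h : LinearizedSystem μ ν ε Ω J ξ a a' f u u' g) :
    modifiedEnergyRate δ Ω ε ξ a a' u u'
      ≤ -(δ / 3) * (‖ξ‖ ^ 4 / energyWeight Ω ε ξ) * modifiedEnergySq δ Ω ε ξ a u
        + 4 * √(energyWeight Ω ε ξ) * √(‖f‖ ^ 2 + ‖g‖ ^ 2)
          * √(modifiedEnergySq δ Ω ε ξ a u) := by
  rw [h.modifiedEnergyRate_eq hε hJ_skew]
  linarith [unforcedEnergyRate_le (Ω := Ω) (a := a) hJ_norm hδ,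
    forcingRate_le (Ω := Ω) (a := a) (f := f) (u := u) (g := g) hδ.nonneg hδ.coercive,
    decayRate_mul_modifiedEnergySq_le (Ω := Ω) (a := a) (u := u) hξ hδ.nonneg hδ.coercive]

theorem modified_energy_exponential_decay_general (hξ : ξ ≠ 0) (hε : ε ≠ 0)
    (hδ : IsAdmissibleWeight μ ν (|ε| * ‖ξ‖) δ) (hJ_skew : ∀ v, (⟪v, J v⟫_ℂ).re = 0)
    (hJ_norm : ∀ v, ‖J v‖ ≤ ‖v‖) {a a' f : ℝ → ℂ} {u u' g : ℝ → H}
    (ha : ∀ t, 0 ≤ t → HasDerivWithinAt a (a' t) (Set.Ici 0) t)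
    (hu : ∀ t, 0 ≤ t → HasDerivWithinAt u (u' t) (Set.Ici 0) t)
    (hf : ContinuousOn f (Set.Ici 0)) (hg : ContinuousOn g (Set.Ici 0))
    (hsys : ∀ t, 0 ≤ t →
      LinearizedSystem μ ν ε Ω J ξ (a t) (a' t) (f t) (u t) (u' t) (g t))
    {t : ℝ} (ht : 0 ≤ t) :
    √(modifiedEnergySq δ Ω ε ξ (a t) (u t))
      ≤ Real.exp (-(δ / 3) * (‖ξ‖ ^ 4 / energyWeight Ω ε ξ) * t)
          * √(modifiedEnergySq δ Ω ε ξ (a 0) (u 0))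
        + 4 * √(energyWeight Ω ε ξ) * ∫ τ in (0 : ℝ)..t,
            Real.exp (-(δ / 3) * (‖ξ‖ ^ 4 / energyWeight Ω ε ξ) * (t - τ))
              * √(‖f τ‖ ^ 2 + ‖g τ‖ ^ 2) := by
  have henergy (τ : ℝ) (hτ : 0 ≤ τ) :
      HasDerivWithinAt (fun τ ↦ modifiedEnergySq δ Ω ε ξ (a τ) (u τ))
        (2 * modifiedEnergyRate δ Ω ε ξ (a τ) (a' τ) (u τ) (u' τ)) (Set.Ici 0) τ :=
    hasDerivWithinAt_modifiedEnergySq (ha τ hτ) (hu τ hτ)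
  have hforcing : ContinuousOn
      (fun τ ↦ 4 * √(energyWeight Ω ε ξ) * √(‖f τ‖ ^ 2 + ‖g τ‖ ^ 2)) (Set.Icc 0 t) :=
    ContinuousOn.mono (by fun_prop) Set.Icc_subset_Ici_self
  have hgronwall := sqrt_le_exp_mul_add_integral_of_deriv_right_le
    (c := -(δ / 3) * (‖ξ‖ ^ 4 / energyWeight Ω ε ξ)) ht
    (fun τ hτ ↦ ((henergy τ hτ.1).continuousWithinAt).mono Set.Icc_subset_Ici_self)
    (fun τ hτ ↦ (henergy τ hτ.1.le).mono fun _ hs ↦ hτ.1.le.trans (Set.mem_Ioi.1 hs).le)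
    (fun τ _ ↦ modifiedEnergySq_nonneg hδ.nonneg hδ.coercive) hforcing.integrableOn_Icc
    (fun τ _ ↦ by positivity) fun τ hτ ↦ by
      rw [mul_div_cancel_left₀ _ two_ne_zero]
      exact (hsys τ hτ.1.le).modifiedEnergyRate_le hξ hε hδ (hJ_skew _) (hJ_norm _)
  simpa only [sub_zero, mul_left_comm (Real.exp _), intervalIntegral.integral_const_mul]
    using hgronwall

end AbstractSystem

section Euclidean

open WithLp
open scoped InnerProductSpace

/-- The frequency `ξ ∈ ℝ³` regarded as a vector of the Hermitian space `ℂ³`. -/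
def complexFrequency (ξ : Fin 3 → ℝ) : EuclideanSpace ℂ (Fin 3) := toLp 2 fun k ↦ (ξ k : ℂ)

/-- The map `e₃ × ·` on the Hermitian space `ℂ³`. -/
def crossE3 (v : EuclideanSpace ℂ (Fin 3)) : EuclideanSpace ℂ (Fin 3) := toLp 2 (cross3 (ofLp v))

variable {μ μ' ε Ω β r t : ℝ} {ξ : Fin 3 → ℝ}

lemma norm_toLp_sq (w : Fin 3 → ℂ) : ‖toLp 2 w‖ ^ 2 = vnormSq w :=
  EuclideanSpace.norm_sq_eq _

lemma pairNorm_eq_sqrt (z : ℂ) (w : Fin 3 → ℂ) : pairNorm z w = √(‖z‖ ^ 2 + ‖toLp 2 w‖ ^ 2) := by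
  rw [norm_toLp_sq, pairNorm]

lemma norm_complexFrequency_sq (ξ : Fin 3 → ℝ) : ‖complexFrequency ξ‖ ^ 2 = xiNormSq ξ := by
  simp only [complexFrequency, norm_toLp_sq, vnormSq, xiNormSq, Complex.norm_real,
    Real.norm_eq_abs, sq_abs]

lemma norm_complexFrequency (ξ : Fin 3 → ℝ) : ‖complexFrequency ξ‖ = xiNorm ξ := by
  rw [xiNorm, ← norm_complexFrequency_sq, Real.sqrt_sq (norm_nonneg _)]

lemma complexFrequency_ne_zero (hξ : ξ ≠ 0) : complexFrequency ξ ≠ 0 := fun h ↦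
  hξ <| funext fun k ↦ Complex.ofReal_eq_zero.1 (congrFun (congrArg ofLp h) k)

lemma inner_complexFrequency (ξ : Fin 3 → ℝ) (w : Fin 3 → ℂ) :
    ⟪complexFrequency ξ, toLp 2 w⟫_ℂ = xiDot ξ w := by
  simp only [complexFrequency, xiDot, PiLp.inner_apply, RCLike.inner_apply, Complex.conj_ofReal,
    mul_comm]

lemma re_inner_crossE3_self (v : EuclideanSpace ℂ (Fin 3)) : (⟪v, crossE3 v⟫_ℂ).re = 0 := by
  simp only [crossE3, cross3, PiLp.inner_apply, RCLike.inner_apply, Fin.sum_univ_three,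
    Matrix.cons_val, Complex.add_re, Complex.mul_re, Complex.neg_re, Complex.neg_im,
    Complex.conj_re, Complex.conj_im, Complex.zero_re, Complex.zero_im]
  ring

lemma norm_crossE3_le (v : EuclideanSpace ℂ (Fin 3)) : ‖crossE3 v‖ ≤ ‖v‖ := by
  refine le_of_sq_le_sq ?_ (norm_nonneg v)
  simp only [crossE3, cross3, EuclideanSpace.norm_sq_eq, Fin.sum_univ_three, Matrix.cons_val,
    norm_neg, norm_zero]
  linarith [sq_nonneg ‖v 2‖]

lemma energyWeight_complexFrequency (Ω ε : ℝ) (ξ : Fin 3 → ℝ) :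
    energyWeight Ω ε (complexFrequency ξ) = Ω ^ 2 * ε ^ 2 + xiNormSq ξ := by
  rw [energyWeight, norm_complexFrequency_sq]

lemma kappa_eq_div_energyWeight (Ω ε : ℝ) (ξ : Fin 3 → ℝ) :
    kappa Ω ε ξ = ‖complexFrequency ξ‖ ^ 4 / energyWeight Ω ε (complexFrequency ξ) := by
  rw [kappa, energyWeight, norm_complexFrequency]

lemma modifiedEnergySq_complexFrequency (δ Ω ε : ℝ) (ξ : Fin 3 → ℝ) (z : ℂ) (w : Fin 3 → ℂ) :
    modifiedEnergySq δ Ω ε (complexFrequency ξ) z (toLp 2 w)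
      = (Ω ^ 2 * ε ^ 2 + xiNormSq ξ) * pairNorm z w ^ 2
        + 2 * δ * xiNormSq ξ * (hinner (fun k ↦ Complex.I * (ε : ℂ) * z * (ξ k : ℂ)) w).re := by
  rw [modifiedEnergySq, energyWeight_complexFrequency, norm_complexFrequency_sq, pairNorm_eq_sqrt,
    Real.sq_sqrt (by positivity)]
  rfl

lemma SystemAt.linearizedSystem {a a' f : ℝ → ℂ} {u u' g : ℝ → Fin 3 → ℂ}
    (h : SystemAt μ μ' ε Ω ξ a a' u u' f g t) :
    LinearizedSystem μ (2 * μ + μ') ε Ω crossE3 (complexFrequency ξ) (a t) (a' t) (f t)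
      (toLp 2 (u t)) (toLp 2 (u' t)) (toLp 2 (g t)) where
  mass := by rw [inner_complexFrequency, h.1]
  momentum := by
    ext k
    rw [inner_complexFrequency, norm_complexFrequency_sq]
    simpa [crossE3, complexFrequency, two_mul, add_sub_right_comm] using h.2 k

lemma isAdmissibleWeight_of_le_two_mul (hμ : 0 < μ) (hβ : 1 ≤ β) (hr : 0 ≤ r) (hrβ : r ≤ 2 * β) :
    IsAdmissibleWeight μ 1 r (min μ 1 / (16 * β ^ 2)) := by
  have hmin : 0 < min μ 1 := lt_min hμ one_pos
  have hmin_le : min μ 1 ≤ 1 := min_le_right μ 1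
  have hβ0 : 0 < β := one_pos.trans_le hβ
  have hβ_le_sq : β ≤ β ^ 2 := le_self_pow₀ hβ two_ne_zero
  have hr_sq : r ^ 2 ≤ 4 * β ^ 2 := by
    calc r ^ 2 ≤ (2 * β) ^ 2 := by gcongr
      _ = 4 * β ^ 2 := by ring
  refine ⟨by positivity, ?_, ?_, ?_⟩
  · calc 16 * (min μ 1 / (16 * β ^ 2)) = min μ 1 / β ^ 2 := by ring
      _ ≤ min μ 1 := div_le_self hmin.le (one_le_pow₀ hβ)
  · calc 8 * (min μ 1 / (16 * β ^ 2)) * r = min μ 1 * r / (2 * β ^ 2) := by ring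
      _ ≤ 1 := by
          rw [div_le_one (mul_pos two_pos (pow_pos hβ0 2))]
          exact (mul_le_mul hmin_le hrβ hr zero_le_one).trans (by linarith)
  · calc 4 * (min μ 1 / (16 * β ^ 2)) * (1 * r) ^ 2 = min μ 1 * r ^ 2 / (4 * β ^ 2) := by
          ring
      _ ≤ min μ 1 * (4 * β ^ 2) / (4 * β ^ 2) := by gcongr
      _ = min μ 1 := by field_simp

lemma hasDerivWithinAt_toLp {u : ℝ → Fin 3 → ℂ} {u' : Fin 3 → ℂ} {s : Set ℝ}
    (hu : HasDerivWithinAt u u' s t) :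
    HasDerivWithinAt (fun τ ↦ toLp 2 (u τ)) (toLp 2 u') s t :=
  (PiLp.hasFDerivAt_toLp (𝕜 := ℝ) 2 (u t)).comp_hasDerivWithinAt t hu

end Euclidean

/-- Exponential decay of the modified energy (estimate (pf:ene-low-10) in the proof of
Lemma 3.2): with `δ = μ̲/(16β²)`, `ξ ≠ 0`, `|ξ| ≤ 2β/ε`, `V(t) = √(V(t)²)` and
`κ = |ξ|⁴/(Ω²ε² + |ξ|²)`,
`V(t) ≤ e^{−(δ/3)κt} V(0) + 4√(Ω²ε² + |ξ|²) ∫₀ᵗ e^{−(δ/3)κ(t−τ)} |(f̂(τ),ĝ(τ))| dτ`. -/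
theorem modified_energy_exponential_decay
    (μ μ' ε Ω β : ℝ) (hμ : 0 < μ) (hμ' : 2 * μ + μ' = 1) (hε : 0 < ε) (hβ : 1 ≤ β)
    (δ : ℝ) (hδ : δ = min μ 1 / (16 * β ^ 2))
    (ξ : Fin 3 → ℝ) (hξ0 : ξ ≠ 0) (hξ : xiNorm ξ ≤ 2 * β / ε)
    (a a' f : ℝ → ℂ) (u u' g : ℝ → Fin 3 → ℂ)
    (ha : ∀ t : ℝ, 0 ≤ t → HasDerivAt a (a' t) t)
    (hu : ∀ t : ℝ, 0 ≤ t → HasDerivAt u (u' t) t)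
    (hf : ContinuousOn f (Set.Ici 0))
    (hg : ContinuousOn g (Set.Ici 0))
    (hsys : ∀ t : ℝ, 0 ≤ t → SystemAt μ μ' ε Ω ξ a a' u u' f g t)
    (V : ℝ → ℝ)
    (hV : ∀ t : ℝ, V t
      = Real.sqrt ((Ω ^ 2 * ε ^ 2 + xiNormSq ξ) * pairNorm (a t) (u t) ^ 2
          + 2 * δ * xiNormSq ξ
              * (hinner (fun k => Complex.I * (ε : ℂ) * a t * (ξ k : ℂ)) (u t)).re)) :
    ∀ t : ℝ, 0 ≤ t →
      V t ≤ Real.exp (-(δ / 3) * kappa Ω ε ξ * t) * V 0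
        + 4 * Real.sqrt (Ω ^ 2 * ε ^ 2 + xiNormSq ξ)
            * ∫ τ in (0:ℝ)..t,
                Real.exp (-(δ / 3) * kappa Ω ε ξ * (t - τ)) * pairNorm (f τ) (g τ) := by
  intro t ht
  have hadmissible : IsAdmissibleWeight μ (2 * μ + μ') (|ε| * ‖complexFrequency ξ‖) δ := by
    rw [hμ', hδ, abs_of_pos hε, norm_complexFrequency]
    refine isAdmissibleWeight_of_le_two_mul hμ hβ (mul_nonneg hε.le (Real.sqrt_nonneg _)) ?_
    rwa [mul_comm, ← le_div_iff₀ hε]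
  simpa only [hV, pairNorm_eq_sqrt, kappa_eq_div_energyWeight, energyWeight_complexFrequency,
      modifiedEnergySq_complexFrequency, Function.comp_apply] using
    modified_energy_exponential_decay_general (complexFrequency_ne_zero hξ0) hε.ne' hadmissible
      re_inner_crossE3_self norm_crossE3_le (fun τ hτ ↦ (ha τ hτ).hasDerivWithinAt)
      (fun τ hτ ↦ hasDerivWithinAt_toLp (hu τ hτ).hasDerivWithinAt) hf
      ((PiLp.continuous_toLp 2 _).comp_continuousOn hg)
      (fun τ hτ ↦ SystemAt.linearizedSystem (hsys τ hτ)) ht
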